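/- Let r be a real 4×4 matrix and ρ_E = Σ_{i,j} r_{ij} Π_i⊗Π_j the corresponding 16×16 matrix (first Bell projector on qubits A'B', second on A''B''). For every 4×4 complex matrix X, the partial trace over the qubits A''B'' of the product ρ_E · (I_4 ⊗ X^T) equals Σ_{i=1}^4 ( Σ_{j=1}^4 r_{ij} · tr(Π_j X) ) Π_i; in particular, the output of the completely positive map corresponding to ρ_E is always diagonal in the Bell basis, and for a Bell-diagonal input X = Σ_j β_j Π_j the output is Σ_i (Σ_j r_{ij} β_j) Π_i. -/

import Mathlib

open Matrix Complex
open scoped Kronecker ComplexOrder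

noncomputable section
namespace Paper

abbrev Q2 := Fin 2 × Fin 2
abbrev M4 := Matrix Q2 Q2 ℂ
abbrev M16 := Matrix (Q2 × Q2) (Q2 × Q2) ℂ

/-- `1/√2` as a complex number. -/
def invSqrt2 : ℂ := ((Real.sqrt 2)⁻¹ : ℝ)

/-- The four Bell states `|Φ₁⟩,…,|Φ₄⟩` as vectors in `ℂ²⊗ℂ²`
(product basis indexed by `Fin 2 × Fin 2`). -/
def bell : Fin 4 → Q2 → ℂ :=
  ![fun p => !![invSqrt2, 0; 0, invSqrt2] p.1 p.2,
    fun p => !![invSqrt2, 0; 0, -invSqrt2] p.1 p.2,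
    fun p => !![0, invSqrt2; invSqrt2, 0] p.1 p.2,
    fun p => !![0, invSqrt2; -invSqrt2, 0] p.1 p.2]

/-- The Bell projectors `Π_i = |Φ_i⟩⟨Φ_i|`. -/
def BellProj (i : Fin 4) : M4 := vecMulVec (bell i) (star (bell i))

/-- The Pauli matrices `σ_x, σ_y, σ_z`. -/
def pauli : Fin 3 → Matrix (Fin 2) (Fin 2) ℂ :=
  ![!![0, 1; 1, 0], !![0, -I; I, 0], !![1, 0; 0, -1]]

/-- Reindexing `((a',b'),(a'',b'')) ↦ ((a',a''),(b',b''))`. -/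
def swapMid : (Q2 × Q2) ≃ (Q2 × Q2) where
  toFun p := ((p.1.1, p.2.1), (p.1.2, p.2.2))
  invFun p := ((p.1.1, p.2.1), (p.1.2, p.2.2))
  left_inv _ := rfl
  right_inv _ := rfl

/-- The rank-one matrix `x x†`. -/
def pureMat {d : Type*} (x : d → ℂ) : Matrix d d ℂ := vecMulVec x (star x)

/-- Separability of a 16×16 four-qubit matrix (qubit order A',B',A'',B'')
across the partition A = (A',A''), B = (B',B''). -/
def SepAB (ρ : M16) : Prop :=
  ∃ (n : ℕ) (x y : Fin n → Q2 → ℂ),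
    (Matrix.reindex swapMid swapMid ρ) = ∑ k, (pureMat (x k)) ⊗ₖ (pureMat (y k))


/-- Partial trace over the qubits A'' and B'' (the second 4-dimensional factor). -/
def ptraceSecond (M : M16) : M4 := fun a c => ∑ b : Q2, M (a, b) (c, b)

/-- The 16×16 matrix corresponding to a 4×4 real matrix `r` of Bell coefficients. -/
def rhoE (r : Matrix (Fin 4) (Fin 4) ℝ) : M16 :=
  ∑ i, ∑ j, (r i j : ℂ) • (BellProj i ⊗ₖ BellProj j)

lemma invSqrt2_sq : invSqrt2 * invSqrt2 = 1 / 2 := by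
  unfold invSqrt2
  rw [← Complex.ofReal_mul, ← mul_inv, Real.mul_self_sqrt (by norm_num)]
  norm_num

lemma star_invSqrt2 : (starRingEnd ℂ) invSqrt2 = invSqrt2 := by
  unfold invSqrt2
  exact Complex.conj_ofReal _

lemma star_bell (i : Fin 4) : star (bell i) = bell i := by
  funext p
  obtain ⟨a, b⟩ := p
  fin_cases i <;> fin_cases a <;> fin_cases b <;> simp [bell, star_invSqrt2]

lemma bellProj_transpose (i : Fin 4) : (BellProj i)ᵀ = BellProj i := by
  unfold BellProj
  rw [star_bell, transpose_vecMulVec]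

lemma bell_dot (i j : Fin 4) : bell i ⬝ᵥ bell j = if i = j then 1 else 0 := by
  have h := invSqrt2_sq
  fin_cases i <;> fin_cases j <;>
    simp [bell, dotProduct, Fintype.sum_prod_type, h] <;> norm_num

lemma bell_trace (i j : Fin 4) :
    (BellProj i * BellProj j).trace = if i = j then 1 else 0 := by
  unfold BellProj
  rw [star_bell, star_bell, vecMulVec_mul_vecMulVec, trace_vecMulVec, dotProduct_smul, bell_dot]
  by_cases h : i = j <;> simp [h]

lemma ptrace_kron (A B : M4) : ptraceSecond (A ⊗ₖ B) = B.trace • A := by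
  ext a c
  simp [ptraceSecond, Matrix.trace, Finset.mul_sum, mul_comm]

lemma ptrace_sum (f : Fin 4 → M16) :
    ptraceSecond (∑ i, f i) = ∑ i, ptraceSecond (f i) := by
  ext a c
  simp only [ptraceSecond, Matrix.sum_apply]
  exact Finset.sum_comm

lemma ptrace_smul (c : ℂ) (M : M16) : ptraceSecond (c • M) = c • ptraceSecond M := by
  ext a d
  simp [ptraceSecond, Finset.mul_sum]

lemma main_part (r : Matrix (Fin 4) (Fin 4) ℝ) (X : M4) :
    ptraceSecond (rhoE r * ((1 : M4) ⊗ₖ Xᵀ)) =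
        ∑ i, (∑ j, (r i j : ℂ) * (BellProj j * X).trace) • BellProj i := by
  have ht : ∀ j, (BellProj j * Xᵀ).trace = (BellProj j * X).trace := by
    intro j
    conv_lhs => rw [← bellProj_transpose j]
    rw [← transpose_mul, trace_transpose, trace_mul_comm]
  unfold rhoE
  simp only [Finset.sum_mul, smul_mul_assoc, ← mul_kronecker_mul, mul_one, ptrace_sum,
    ptrace_smul, ptrace_kron, ht, Finset.sum_smul, smul_smul]

/-- for every 4×4 matrix `X`,
`tr_{A''B''}(ρ_E · (I₄ ⊗ Xᵀ)) = Σ_i (Σ_j r_{ij} tr(Π_j X)) Π_i`; in particular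
the output of the CPM corresponding to `ρ_E` is always Bell diagonal, and for a
Bell-diagonal input `X = Σ_j β_j Π_j` the output is `Σ_i (Σ_j r_{ij} β_j) Π_i`. -/
theorem stmt11 (r : Matrix (Fin 4) (Fin 4) ℝ) :
    (∀ X : M4,
      ptraceSecond (rhoE r * ((1 : M4) ⊗ₖ Xᵀ)) =
        ∑ i, (∑ j, (r i j : ℂ) * (BellProj j * X).trace) • BellProj i) ∧
    (∀ β : Fin 4 → ℂ,
      ptraceSecond (rhoE r * ((1 : M4) ⊗ₖ (∑ j, β j • BellProj j)ᵀ)) =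
        ∑ i, (∑ j, (r i j : ℂ) * β j) • BellProj i) := by
  refine ⟨main_part r, fun β => ?_⟩
  rw [main_part]
  have hb : ∀ j, (BellProj j * ∑ k, β k • BellProj k).trace = β j := by
    intro j
    simp [Finset.mul_sum, trace_sum, bell_trace]
  simp only [hb]

end Paper
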